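/- arXiv:1609.04116 — 2 statements merged into one kernel-verified Lean document; each statement's English description precedes it below -/
import Mathlib

section
/- Let E be a real inner product space, let x_1, …, x_N ∈ E be training samples, let λ1, λ2, λ3 be real numbers, and let ℓ_{g,1}, …, ℓ_{g,N}, ℓ_{a,1}, …, ℓ_{a,N} : ℝ → ℝ be differentiable functions. Define the joint regularized objective J(w_g, w_a) = Σ_{i=1}^N ℓ_{g,i}(⟪w_g, x_i⟫) + (λ1/2)‖w_g‖² + Σ_{i=1}^N ℓ_{a,i}(⟪w_a, x_i⟫) + (λ2/2)‖w_a‖² + (λ3/2)⟪w_g, w_a⟫². If (w_g, w_a) is a stationary point of J, i.e. the Fréchet derivatives of the partial maps w ↦ J(w, w_a) at w_g and w ↦ J(w_g, w) at w_a are both zero, and if λ1·λ2 ≠ λ3²·⟪w_g, w_a⟫², then w_g and w_a both lie in the linear span of {x_1, …, x_N} (representer theorem for the joint gender–age objective). -/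
open scoped RealInnerProductSpace

/-!
In each block of variables the gradient of the objective is a combination of the samples plus a
combination of `w_g` and `w_a`. Writing `b = lam3 * ⟪w_g, w_a⟫`, stationarity therefore says that
`lam1 • w_g + b • w_a` and `lam2 • w_a + b • w_g` both lie in the span `S` of the samples
(`smul_add_smul_mem_span_of_fderiv_eq_zero`, applied once per block). Modulo `S` this is a
homogeneous `2 × 2` linear system with determinant `lam1 * lam2 - b ^ 2 ≠ 0`, so both vectors
vanish modulo `S` (`mem_of_smul_add_smul_mem`).
-/

/-- The gradient at `w₀` of one block of the objective, the other vector `v` being fixed (its own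
terms are the constant `c`), is a combination of the samples plus `a • w₀ + (b * ⟪w₀, v⟫) • v`; if it
vanishes, the latter vector lies in the span of the samples. -/
lemma smul_add_smul_mem_span_of_fderiv_eq_zero {E : Type*} [NormedAddCommGroup E]
    [InnerProductSpace ℝ E] {N : ℕ} (x : Fin N → E) (ℓ : Fin N → ℝ → ℝ)
    (hℓ : ∀ i, Differentiable ℝ (ℓ i)) (a b c : ℝ) (v w₀ : E)
    (h : fderiv ℝ (fun w => ∑ i, ℓ i ⟪w, x i⟫ + (a / 2) * ‖w‖ ^ 2 + c
      + (b / 2) * ⟪w, v⟫ ^ 2) w₀ = 0) :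
    a • w₀ + (b * ⟪w₀, v⟫) • v ∈ Submodule.span ℝ (Set.range x) := by
  have hinner : ∀ y : E, HasFDerivAt (fun w : E => ⟪w, y⟫) (innerSL ℝ y) w₀ := fun y =>
    (innerSL ℝ y).hasFDerivAt.congr_of_eventuallyEq (.of_forall fun w => real_inner_comm y w)
  have hsum : HasFDerivAt (fun w : E => ∑ i, ℓ i ⟪w, x i⟫)
      (∑ i, deriv (ℓ i) ⟪w₀, x i⟫ • innerSL ℝ (x i)) w₀ :=
    HasFDerivAt.fun_sum fun i _ =>
      ((hℓ i) ⟪w₀, x i⟫).hasDerivAt.comp_hasFDerivAt w₀ (hinner (x i))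
  have hF := ((hsum.add
    ((hasStrictFDerivAt_norm_sq w₀).hasFDerivAt.const_mul (a / 2))).add_const c).add
    (((hinner v).pow 2).const_mul (b / 2))
  have h0 := hF.fderiv.symm.trans h
  have hgrad : ∑ i, deriv (ℓ i) ⟪w₀, x i⟫ • x i + (a • w₀ + (b * ⟪w₀, v⟫) • v) = 0 := by
    refine ext_inner_right ℝ fun u => ?_
    have hu := DFunLike.congr_fun h0 u
    simp [inner_add_left, sum_inner, real_inner_smul_left] at hu ⊢
    linarith
  rw [eq_neg_of_add_eq_zero_right hgrad]
  exact neg_mem (sum_mem fun i _ => Submodule.smul_mem _ _ (Submodule.subset_span ⟨i, rfl⟩))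

/-- Cramer's rule modulo a subspace, for the first unknown of a symmetric `2 × 2` system. -/
lemma mem_of_smul_add_smul_mem {E : Type*} [AddCommGroup E] [Module ℝ E] (S : Submodule ℝ E)
    {p q b : ℝ} {u v : E} (hu : p • u + b • v ∈ S) (hv : q • v + b • u ∈ S)
    (hdet : p * q - b ^ 2 ≠ 0) : u ∈ S := by
  have key : (p * q - b ^ 2) • u = q • (p • u + b • v) - b • (q • v + b • u) := by module
  rw [← S.smul_mem_iff hdet, key]
  exact S.sub_mem (S.smul_mem _ hu) (S.smul_mem _ hv)

/-- Representer theorem for the joint gender–age regularized objective: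
at a stationary point with `lam1·lam2 ≠ lam3²·⟪w_g, w_a⟫²`, both semantic directions
lie in the span of the training samples. -/
theorem representer_joint {E : Type*} [NormedAddCommGroup E] [InnerProductSpace ℝ E]
    (N : ℕ) (x : Fin N → E) (lam1 lam2 lam3 : ℝ)
    (ℓg ℓa : Fin N → ℝ → ℝ)
    (hℓg : ∀ i, Differentiable ℝ (ℓg i)) (hℓa : ∀ i, Differentiable ℝ (ℓa i))
    (J : E → E → ℝ)
    (hJ : ∀ wg wa, J wg wa =
      ∑ i, ℓg i ⟪wg, x i⟫ + (lam1 / 2) * ‖wg‖ ^ 2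
      + ∑ i, ℓa i ⟪wa, x i⟫ + (lam2 / 2) * ‖wa‖ ^ 2
      + (lam3 / 2) * ⟪wg, wa⟫ ^ 2)
    (wg wa : E)
    (hstat_g : fderiv ℝ (fun w => J w wa) wg = 0)
    (hstat_a : fderiv ℝ (fun w => J wg w) wa = 0)
    (hnd : lam1 * lam2 ≠ lam3 ^ 2 * ⟪wg, wa⟫ ^ 2) :
    wg ∈ Submodule.span ℝ (Set.range x) ∧ wa ∈ Submodule.span ℝ (Set.range x) := by
  have hg := smul_add_smul_mem_span_of_fderiv_eq_zero x ℓg hℓg lam1 lam3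
    (∑ i, ℓa i ⟪wa, x i⟫ + (lam2 / 2) * ‖wa‖ ^ 2) wa wg (by
      rw [← hstat_g]; congr 1; funext w; rw [hJ]; ring)
  have ha := smul_add_smul_mem_span_of_fderiv_eq_zero x ℓa hℓa lam2 lam3
    (∑ i, ℓg i ⟪wg, x i⟫ + (lam1 / 2) * ‖wg‖ ^ 2) wg wa (by
      rw [← hstat_a]; congr 1; funext w; rw [hJ, real_inner_comm]; ring)
  rw [real_inner_comm] at ha
  have hdet : lam1 * lam2 - (lam3 * ⟪wg, wa⟫) ^ 2 ≠ 0 := by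
    rw [mul_pow]; exact sub_ne_zero.mpr hnd
  exact ⟨mem_of_smul_add_smul_mem _ hg ha hdet,
    mem_of_smul_add_smul_mem _ ha hg (by rwa [mul_comm lam2 lam1])⟩
end

section
/- Let E be a finite-dimensional real inner product space, let x_1, …, x_N ∈ E with labels y_1, …, y_N ∈ {−1, 1}, let w_a ∈ E be fixed, and let λ1 > 0 and λ3 ≥ 0. Suppose there exists at least one index i with y_i = 1 and at least one index j with y_j = −1. Then the SVM subproblem objective G(w_g, b) = (1/2)‖w_g‖² + λ1·Σ_{i=1}^N max(0, 1 − y_i·(⟪w_g, x_i⟫ + b)) + λ3·⟪w_g, w_a⟫² attains its infimum on E × ℝ, i.e. there exists (w_g*, b*) with G(w_g*, b*) ≤ G(w_g, b) for all (w_g, b) ∈ E × ℝ. -/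
/-! The objective `G` is continuous and `E × ℝ` is proper, so it is enough that the sublevel set
`{G ≤ G (0, 0)}` is bounded. All three terms of `G` are nonnegative: the quadratic term bounds
`‖w‖`, and then the hinge loss of a positive sample bounds `b` from below while that of a negative
sample bounds `b` from above. -/


open scoped RealInnerProductSpace

/-- In finite dimension, with `λ1 > 0` and samples of both gender classes present,
the SVM subproblem objective of the joint model attains its infimum on `E × ℝ`. -/
theorem svm_subproblem_attains_min {E : Type*} [NormedAddCommGroup E]
    [InnerProductSpace ℝ E] [FiniteDimensional ℝ E]
    (N : ℕ) (x : Fin N → E) (y : Fin N → ℝ)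
    (hy : ∀ i, y i = -1 ∨ y i = 1)
    (hpos : ∃ i, y i = 1) (hneg : ∃ j, y j = -1)
    (wa : E) (lam1 lam3 : ℝ) (hlam1 : 0 < lam1) (hlam3 : 0 ≤ lam3) :
    ∃ p : E × ℝ, ∀ q : E × ℝ,
      (1 / 2) * ‖p.1‖ ^ 2
        + lam1 * ∑ i, max 0 (1 - y i * (⟪p.1, x i⟫ + p.2))
        + lam3 * ⟪p.1, wa⟫ ^ 2
      ≤ (1 / 2) * ‖q.1‖ ^ 2
        + lam1 * ∑ i, max 0 (1 - y i * (⟪q.1, x i⟫ + q.2))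
        + lam3 * ⟪q.1, wa⟫ ^ 2 := by
  obtain ⟨i, hi⟩ := hpos
  obtain ⟨j, hj⟩ := hneg
  let G : E × ℝ → ℝ := fun p => (1 / 2) * ‖p.1‖ ^ 2
    + lam1 * ∑ i, max 0 (1 - y i * (⟪p.1, x i⟫ + p.2)) + lam3 * ⟪p.1, wa⟫ ^ 2
  have hcont : Continuous G := by fun_prop
  set C := G (0, 0)
  set R := 2 * C + 1 with hR
  set B := C / lam1 + R * ‖x i‖ + R * ‖x j‖ + 1 with hB
  refine hcont.exists_forall_le' (0, 0) ?_
  filter_upwards [(isCompact_closedBall (0 : E × ℝ) (max R B)).compl_mem_cocompact] with q hq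
  by_contra! hlt
  refine hq ?_
  have hS : ∀ k, max 0 (1 - y k * (⟪q.1, x k⟫ + q.2))
      ≤ ∑ i, max 0 (1 - y i * (⟪q.1, x i⟫ + q.2)) := fun k =>
    Finset.single_le_sum (f := fun i => max 0 (1 - y i * (⟪q.1, x i⟫ + q.2)))
      (fun _ _ => le_max_left _ _) (Finset.mem_univ k)
  have hS0 : 0 ≤ ∑ i, max 0 (1 - y i * (⟪q.1, x i⟫ + q.2)) :=
    Finset.sum_nonneg fun _ _ => le_max_left _ _
  have hGq : (1 / 2) * ‖q.1‖ ^ 2 + lam1 * ∑ i, max 0 (1 - y i * (⟪q.1, x i⟫ + q.2))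
      + lam3 * ⟪q.1, wa⟫ ^ 2 < C := hlt
  have h1 : 0 ≤ lam1 * ∑ i, max 0 (1 - y i * (⟪q.1, x i⟫ + q.2)) := mul_nonneg hlam1.le hS0
  have h3 : 0 ≤ lam3 * ⟪q.1, wa⟫ ^ 2 := mul_nonneg hlam3 (sq_nonneg _)
  have hw : ‖q.1‖ ≤ R := by nlinarith [sq_nonneg (‖q.1‖ - 1)]
  have hSC : ∑ i, max 0 (1 - y i * (⟪q.1, x i⟫ + q.2)) ≤ C / lam1 := by
    rw [le_div_iff₀ hlam1]
    nlinarith [sq_nonneg ‖q.1‖]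
  have hin : ∀ k, |⟪q.1, x k⟫| ≤ R * ‖x k‖ := fun k =>
    (abs_real_inner_le_norm _ _).trans (mul_le_mul_of_nonneg_right hw (norm_nonneg _))
  have hi' := (le_max_right _ _).trans ((hS i).trans hSC)
  have hj' := (le_max_right _ _).trans ((hS j).trans hSC)
  rw [hi] at hi'
  rw [hj] at hj'
  have hb : |q.2| ≤ B := by
    have := abs_le.1 (hin i)
    have := abs_le.1 (hin j)
    have := (abs_nonneg _).trans (hin i)
    have := (abs_nonneg _).trans (hin j)
    rw [abs_le]
    constructor <;> linarith
  rw [mem_closedBall_zero_iff, Prod.norm_def]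
  exact max_le_max hw hb
end
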